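/- Let p and q be coprime integers with q > 0, p ≠ 0, and p/q ∉ {1, −1, 2, −2}, and let σ ∈ PGL₂(ℚ) be given by σ(z) = qz/(pz − q) (an involution). Then for every algebraic number α with α ≠ 0, h(α) + h(σ(α)) ≥ log max(||p| − q|, q). Moreover, equality holds for α = 1 if p > 0, and for α = −1 if p < 0. -/

import Mathlib

/- For a nonzero `f ∈ ℤ[X]`, the Mahler measure `M(f) = |a_n| ∏ max(|α_i|,1)`. -/
open Polynomial

noncomputable def mahlerMeasure (f : ℤ[X]) : ℝ :=
  |(f.leadingCoeff : ℝ)| *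
    (((f.map (Int.castRingHom ℂ)).roots).map (fun z => max ‖z‖ 1)).prod

/-- The primitive minimal polynomial over `ℤ` of an algebraic number. -/
noncomputable def intMinpoly (α : ℂ) : ℤ[X] :=
  (IsLocalization.integerNormalization (nonZeroDivisors ℤ) (minpoly ℚ α)).primPart

/-- The absolute logarithmic Weil height `h(α) = (1/n) log M(f)`. -/
noncomputable def height (α : ℂ) : ℝ :=
  Real.log (mahlerMeasure (intMinpoly α)) / (minpoly ℚ α).natDegree

/-!
Put `u = 1/α` and `v = 1/σ(α)`. Then `u + v = p/q`, and heights are invariant under inversion, so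
it suffices to bound `h(u) + h(p/q - u)` from below. The primitive minimal polynomials of `u` and
`v`, with leading coefficients `A` and `B`, have the same degree `n`, and their roots can be indexed
so that `uᵢ + vᵢ = p/q`. By Gauss's lemma `A * ∏_{i ∈ I} uᵢ` and `B * ∏_{i ∉ I} vᵢ` are algebraic
integers for every index set `I`, hence so is `A * B * ∏ᵢ (uᵢ + vᵢ) = A * B * (p/q)^n`. Coprimality
of `p` and `q` forces `q^n ∣ A * B`. At the archimedean place,
`max 1 (|p/q| - 1) ≤ max |uᵢ| 1 * max |vᵢ| 1`. Multiplying the two estimates bounds the product of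
the Mahler measures below by `max (||p| - q|) q ^ n`. At `α = ±1` the heights are those of
rational numbers.
-/

section GaussLemma
variable {R S : Type*} [CommRing R] [CommRing S] [Algebra R S]

theorem leadingCoeff_mul_mem_range_of_X_sub_C_mul_mem_lifts [IsIntegrallyClosedIn R S] {a : S}
    {Q : S[X]} (h : (X - C a) * Q ∈ lifts (algebraMap R S)) :
    Q.leadingCoeff * a ∈ Set.range (algebraMap R S) := by
  obtain ⟨P, hP⟩ := (mem_lifts _).1 h
  have ha : aeval a P = 0 := by
    rw [← eval_map_algebraMap, hP, eval_mul, eval_sub, eval_X, eval_C, sub_self, zero_mul]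
  have hlead : algebraMap R S P.leadingCoeff = Q.leadingCoeff := by
    rw [← leadingCoeff_map_of_injective
      (IsIntegralClosure.algebraMap_injective R R S), hP, leadingCoeff_monic_mul (monic_X_sub_C a)]
  rw [← hlead, ← Algebra.smul_def]
  exact IsIntegrallyClosedIn.algebraMap_eq_of_integral (isIntegral_leadingCoeff_smul P a ha)

theorem mem_liftsRing_of_X_sub_C_mul_mem [IsIntegrallyClosedIn R S] {a : S} {Q : S[X]}
    (h : (X - C a) * Q ∈ liftsRing (algebraMap R S)) : Q ∈ liftsRing (algebraMap R S) := by
  induction hn : Q.support.card using Nat.strong_induction_on generalizing Q with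
  | _ n ih =>
    obtain rfl | hQ := eq_or_ne Q 0
    · exact zero_mem _
    have hlifts := (lifts_iff_liftsRing _ _).2 h
    have hlead : Q.leadingCoeff ∈ Set.range (algebraMap R S) := by
      rw [← leadingCoeff_monic_mul (q := Q) (monic_X_sub_C a)]
      exact (lifts_iff_coeff_lifts _).1 hlifts _
    have hmonomial {s : S} (n : ℕ) (hs : s ∈ Set.range (algebraMap R S)) :
        monomial n s ∈ liftsRing (algebraMap R S) :=
      (lifts_iff_liftsRing _ _).1 (monomial_mem_lifts n hs)
    have hsum := Q.eraseLead_add_monomial_natDegree_leadingCoeff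
    -- The leading terms of `Q` and of `a * Q` both lift, so the leading term can be split off `Q`.
    have herase : (X - C a) * Q.eraseLead = (X - C a) * Q -
        (monomial (Q.natDegree + 1) Q.leadingCoeff -
          monomial Q.natDegree (Q.leadingCoeff * a)) := by
      rw [← X_mul_monomial, mul_comm Q.leadingCoeff a, ← C_mul_monomial]
      linear_combination (X - C a) * hsum
    rw [← hsum]
    refine add_mem (ih _ (hn ▸ eraseLead_support_card_lt hQ) ?_ rfl) (hmonomial _ hlead)
    rw [herase]
    exact sub_mem h (sub_mem (hmonomial _ hlead)
      (hmonomial _ (leadingCoeff_mul_mem_range_of_X_sub_C_mul_mem_lifts hlifts)))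

theorem mem_liftsRing_of_prod_X_sub_C_mul_mem [IsIntegrallyClosedIn R S] {s : Multiset S}
    {Q : S[X]} (h : (s.map fun a => X - C a).prod * Q ∈ liftsRing (algebraMap R S)) :
    Q ∈ liftsRing (algebraMap R S) := by
  induction s using Multiset.induction_on with
  | empty => simpa using h
  | cons a s ih =>
    rw [Multiset.map_cons, Multiset.prod_cons, mul_assoc] at h
    exact ih (mem_liftsRing_of_X_sub_C_mul_mem h)

theorem isIntegral_leadingCoeff_mul_prod [IsDomain S] [FaithfulSMul R S] {f : R[X]}
    (hf : (f.map (algebraMap R S)).Splits) {s : Multiset S} (hs : s ≤ f.aroots S) :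
    IsIntegral R (algebraMap R S f.leadingCoeff * s.prod) := by
  obtain ⟨t, ht⟩ := Multiset.le_iff_exists_add.1 hs
  let Q : S[X] := C (algebraMap R S f.leadingCoeff) * (s.map fun a => X - C a).prod
  have hfac : (t.map fun a => X - C a).prod * Q = f.map (algebraMap R S) := by
    rw [hf.eq_prod_roots, ← aroots_def, ht, Multiset.map_add, Multiset.prod_add,
      leadingCoeff_map_of_injective (FaithfulSMul.algebraMap_injective R S)]
    simp only [Q]
    ring
  have hlift : (t.map fun a => X - C a).prod * Q ∈
      liftsRing (algebraMap (integralClosure R S) S) := by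
    rw [hfac]
    exact ⟨f.map (algebraMap R (integralClosure R S)), by
      rw [coe_mapRingHom, map_map, ← IsScalarTower.algebraMap_eq]⟩
  have hQ := (lifts_iff_liftsRing _ _).2 (mem_liftsRing_of_prod_X_sub_C_mul_mem hlift)
  obtain ⟨c, hc⟩ := (lifts_iff_coeff_lifts _).1 hQ 0
  have hcoeff : Q.coeff 0 = (-1) ^ s.card * (algebraMap R S f.leadingCoeff * s.prod) := by
    simp only [mul_coeff_zero, coeff_C_zero, coeff_zero_multiset_prod, Multiset.map_map,
      Function.comp_apply, coeff_sub, coeff_X_zero, zero_sub, Multiset.prod_map_neg, Q]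
    ring
  have hsq : (-1 : S) ^ s.card * (-1) ^ s.card = 1 := by
    rw [← mul_pow, neg_one_mul, neg_neg, one_pow]
  rw [← one_mul (_ * _), ← hsq, mul_assoc, ← hcoeff, ← hc]
  exact (isIntegral_one.neg.pow _).mul c.2

theorem isIntegral_leadingCoeff_mul_leadingCoeff_mul_prod_add [IsDomain S] [FaithfulSMul R S]
    {f g : R[X]} (hf : (f.map (algebraMap R S)).Splits) (hg : (g.map (algebraMap R S)).Splits)
    {σ : S → S} (hσ : g.aroots S = (f.aroots S).map σ) :
    IsIntegral R (algebraMap R S f.leadingCoeff * algebraMap R S g.leadingCoeff *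
      ((f.aroots S).map fun a => a + σ a).prod) := by
  rw [Multiset.prod_map_add, ← Multiset.sum_map_mul_left]
  refine .multiset_sum fun z hz => ?_
  obtain ⟨⟨s, t⟩, hst, rfl⟩ := Multiset.mem_map.1 hz
  have hsum := Multiset.mem_antidiagonal.1 hst
  have hs : s ≤ f.aroots S := hsum ▸ Multiset.le_add_right s t
  have ht : t.map σ ≤ g.aroots S := hσ ▸ Multiset.map_le_map (hsum ▸ Multiset.le_add_left t s)
  convert (isIntegral_leadingCoeff_mul_prod hf hs).mul
    (isIntegral_leadingCoeff_mul_prod hg ht) using 1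
  rw [Multiset.map_id']
  ring

end GaussLemma

theorem mahlerMeasure_reverse (f : ℂ[X]) : f.reverse.mahlerMeasure = f.mahlerMeasure := by
  have hX : (X : ℂ[X]).reverse = 1 := by rw [← mul_one X, reverse_X_mul, ← C_1, reverse_C]
  induction IsAlgClosed.splits f using Submonoid.closure_induction with
  | mem g hg =>
    obtain ⟨a, rfl⟩ | ⟨a, rfl⟩ := hg
    · rw [reverse_C]
    · rw [reverse_add_C, natDegree_X, pow_one, hX, ← C_1, add_comm,
        mahlerMeasure_X_add_C]
      obtain rfl | ha := eq_or_ne a 0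
      · simp
      · rw [mahlerMeasure_C_mul_X_add_C ha, norm_one, max_comm]
  | one => rw [← C_1, reverse_C]
  | mul g h _ _ hg hh => rw [reverse_mul_of_domain, mahlerMeasure_mul, hg, hh, mahlerMeasure_mul]

theorem mahlerMeasure_eq_mahlerMeasure_map (f : ℤ[X]) :
    mahlerMeasure f = (f.map (Int.castRingHom ℂ)).mahlerMeasure := by
  rw [mahlerMeasure_eq_leadingCoeff_mul_prod_roots, _root_.mahlerMeasure,
    leadingCoeff_map_of_injective (RingHom.injective_int _), eq_intCast, Complex.norm_intCast]
  simp only [max_comm]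

theorem mahlerMeasure_pos {f : ℤ[X]} (hf : f ≠ 0) : 0 < mahlerMeasure f := by
  rw [mahlerMeasure_eq_mahlerMeasure_map]
  exact mahlerMeasure_pos_of_ne_zero ((Polynomial.map_ne_zero_iff (RingHom.injective_int _)).2 hf)

theorem mahlerMeasure_mirror (f : ℤ[X]) :
    mahlerMeasure f.mirror = mahlerMeasure f := by
  have hreverse : f.reverse.map (Int.castRingHom ℂ) = (f.map (Int.castRingHom ℂ)).reverse := by
    rw [reverse, reverse, reflect_map, natDegree_map_eq_of_injective (RingHom.injective_int _)]
  have hX : (X ^ f.natTrailingDegree : ℂ[X]).mahlerMeasure = 1 := by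
    simp [mahlerMeasure_eq_leadingCoeff_mul_prod_roots, Multiset.map_nsmul, Multiset.prod_nsmul]
  simp only [mahlerMeasure_eq_mahlerMeasure_map, mirror, Polynomial.map_mul, Polynomial.map_pow,
    map_X, hreverse, mahlerMeasure_mul, mahlerMeasure_reverse, hX, mul_one]

theorem mahlerMeasure_eq_of_associated {f g : ℤ[X]} (h : Associated f g) :
    mahlerMeasure f = mahlerMeasure g := by
  have hlead : |f.leadingCoeff| = |g.leadingCoeff| :=
    abs_eq_abs.2 (Int.associated_iff.1 (h.map leadingCoeffHom))
  have hroots := (h.map (mapRingHom (Int.castRingHom ℂ))).roots_eq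
  rw [coe_mapRingHom] at hroots
  rw [_root_.mahlerMeasure, _root_.mahlerMeasure, ← Int.cast_abs, hlead, Int.cast_abs, hroots]

theorem irreducible_mirror {R : Type*} [Semiring R] [NoZeroDivisors R] {f : R[X]} :
    Irreducible f.mirror ↔ Irreducible f :=
  MulEquiv.irreducible_iff
    ({ mirror_involutive.toPerm with map_mul' := fun p q => mirror_mul_of_domain p q } :
      R[X] ≃* R[X])

theorem aeval_inv_mirror {R K : Type*} [CommRing R] [Field K] [Algebra R K] {f : R[X]} {x : K}
    (hx : x ≠ 0) (hf : aeval x f = 0) : aeval x⁻¹ f.mirror = 0 := by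
  let := invertibleOfNonzero hx
  rw [aeval_def] at hf
  rw [mirror, map_mul, aeval_def, ← invOf_eq_inv, (eval₂_reverse_eq_zero_iff _ _ _).2 hf, zero_mul]

theorem associated_map_intMinpoly_minpoly {α : ℂ} (hα : IsAlgebraic ℚ α) :
    Associated ((intMinpoly α).map (Int.castRingHom ℚ)) (minpoly ℚ α) := by
  obtain ⟨b, hb, hG⟩ := IsLocalization.integerNormalization_spec (nonZeroDivisors ℤ) (minpoly ℚ α)
  set G := IsLocalization.integerNormalization (nonZeroDivisors ℤ) (minpoly ℚ α)
  have hG0 : G ≠ 0 := (IsLocalization.integerNormalization_eq_zero_iff le_rfl _).not.2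
    (minpoly.ne_zero hα.isIntegral)
  have hscalar {n : ℤ} (hn : n ≠ 0) : IsUnit (C (n : ℚ)) :=
    isUnit_C.2 (Int.cast_ne_zero.2 hn).isUnit
  have hprim : G.map (Int.castRingHom ℚ) =
      C (G.content : ℚ) * (intMinpoly α).map (Int.castRingHom ℚ) := by
    conv_lhs => rw [G.eq_C_content_mul_primPart, Polynomial.map_mul, map_C, eq_intCast]
    rfl
  have hmin : G.map (Int.castRingHom ℚ) = C (b : ℚ) * minpoly ℚ α := by
    rw [← algebraMap_int_eq, hG, zsmul_eq_mul, map_intCast]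
  exact (associated_unit_mul_right _ _ (hscalar (content_eq_zero_iff.not.2 hG0))).trans <|
    (hprim.symm.trans hmin ▸ associated_unit_mul_left _ _ (hscalar (nonZeroDivisors.ne_zero hb)))

theorem isPrimitive_intMinpoly (α : ℂ) : (intMinpoly α).IsPrimitive :=
  isPrimitive_primPart _

theorem irreducible_intMinpoly {α : ℂ} (hα : IsAlgebraic ℚ α) : Irreducible (intMinpoly α) :=
  (isPrimitive_intMinpoly α).irreducible_iff_irreducible_map_fraction_map.2 <|
    (associated_map_intMinpoly_minpoly hα).irreducible_iff.2 (minpoly.irreducible hα.isIntegral)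

theorem natDegree_intMinpoly {α : ℂ} (hα : IsAlgebraic ℚ α) :
    (intMinpoly α).natDegree = (minpoly ℚ α).natDegree := by
  rw [← natDegree_map_eq_of_injective (RingHom.injective_int (Int.castRingHom ℚ))]
  exact natDegree_eq_of_degree_eq
    (degree_eq_degree_of_associated (associated_map_intMinpoly_minpoly hα))

theorem aroots_intMinpoly {α : ℂ} (hα : IsAlgebraic ℚ α) :
    (intMinpoly α).aroots ℂ = (minpoly ℚ α).aroots ℂ := by
  have h := ((associated_map_intMinpoly_minpoly hα).map (mapRingHom (algebraMap ℚ ℂ))).roots_eq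
  rwa [coe_mapRingHom, map_map, RingHom.ext_int ((algebraMap ℚ ℂ).comp _) (algebraMap ℤ ℂ)] at h

theorem aeval_intMinpoly {α : ℂ} (hα : IsAlgebraic ℚ α) : aeval α (intMinpoly α) = 0 := by
  rw [← aeval_map_algebraMap ℚ, ← minpoly.dvd_iff]
  exact (associated_map_intMinpoly_minpoly hα).symm.dvd

theorem height_eq_of_irreducible {f : ℤ[X]} (hf : Irreducible f) {α : ℂ} (hα : aeval α f = 0) :
    height α = Real.log (mahlerMeasure f) / f.natDegree := by
  have halg : IsAlgebraic ℚ α :=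
    (IsFractionRing.isAlgebraic_iff ℤ ℚ ℂ).1 ⟨f, hf.ne_zero, hα⟩
  have hdvd : intMinpoly α ∣ f := by
    rw [(isPrimitive_intMinpoly α).dvd_iff_fraction_map_dvd_fraction_map ℚ]
    refine (associated_map_intMinpoly_minpoly halg).dvd.trans (minpoly.dvd ℚ α ?_)
    rw [aeval_map_algebraMap, hα]
  have h := (irreducible_intMinpoly halg).associated_of_dvd hf hdvd
  rw [height, ← natDegree_intMinpoly halg, mahlerMeasure_eq_of_associated h,
    natDegree_eq_of_degree_eq (degree_eq_degree_of_associated h)]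

theorem height_inv {α : ℂ} (hα : IsAlgebraic ℚ α) : height α⁻¹ = height α := by
  obtain rfl | h0 := eq_or_ne α 0
  · rw [inv_zero]
  · rw [height_eq_of_irreducible (irreducible_mirror.2 (irreducible_intMinpoly hα))
      (aeval_inv_mirror h0 (aeval_intMinpoly hα)), mahlerMeasure_mirror, mirror_natDegree,
      height, natDegree_intMinpoly hα]

theorem height_intCast_div {a b : ℤ} (hb : b ≠ 0) (hab : IsCoprime a b) :
    height ((a : ℂ) / b) = Real.log (max |a| |b| : ℤ) := by
  have hb' : (b : ℂ) ≠ 0 := Int.cast_ne_zero.2 hb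
  have hirr : Irreducible (C b * X + C (-a)) :=
    irreducible_C_mul_X_add_C hb hab.symm.neg_right.isRelPrime
  rw [height_eq_of_irreducible hirr (by simp [mul_div_cancel₀ _ hb']), natDegree_linear hb,
    mahlerMeasure_eq_mahlerMeasure_map]
  rw [Polynomial.map_add, Polynomial.map_mul, map_X, map_C, map_C, eq_intCast, eq_intCast,
    mahlerMeasure_C_mul_X_add_C hb', Complex.norm_intCast, Complex.norm_intCast, max_comm]
  simp

theorem aroots_minpoly_algebraMap_sub {K L : Type*} [Field K] [Field L] [Algebra K L] (a : K)
    (x : L) : (minpoly K (algebraMap K L a - x)).aroots L =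
      ((minpoly K x).aroots L).map (algebraMap K L a - ·) := by
  have hsign : ((-1) ^ ((minpoly K x).comp (X + C a)).natDegree : K[X]) =
      C ((-1) ^ ((minpoly K x).comp (X + C a)).natDegree) := by
    rw [C_pow, C_neg, C_1]
  have hroots := roots_comp_C_mul_X_add_C ((minpoly K x).map (algebraMap K L)) 1
    (algebraMap K L a) isUnit_one
  rw [C_1, one_mul] at hroots
  rw [← neg_sub, minpoly.neg, minpoly.sub_algebraMap, hsign,
    aroots_C_mul _ (pow_ne_zero _ (neg_ne_zero.2 one_ne_zero)), aroots_def, map_comp,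
    Polynomial.map_neg, map_X, roots_comp_neg_X, map_comp, Polynomial.map_add, map_X, map_C,
    hroots, Multiset.map_map, aroots_def]
  simp

theorem max_one_norm_add_sub_one_le {E : Type*} [SeminormedAddGroup E] (u v : E) :
    max 1 (‖u + v‖ - 1) ≤ max ‖u‖ 1 * max ‖v‖ 1 := by
  have hu := le_max_right ‖u‖ 1
  have hv := le_max_right ‖v‖ 1
  refine max_le (one_le_mul_of_one_le_of_one_le hu hv) ?_
  calc ‖u + v‖ - 1 ≤ max ‖u‖ 1 + max ‖v‖ 1 - 1 := by
        gcongr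
        exact (norm_add_le u v).trans (add_le_add (le_max_left _ _) (le_max_left _ _))
    _ ≤ max ‖u‖ 1 * max ‖v‖ 1 := by nlinarith only [hu, hv]

theorem dvd_of_algebraMap_mul_eq {R L : Type*} [CommRing R] [IsDomain R] [IsIntegrallyClosed R]
    [Field L] [Algebra R L] [FaithfulSMul R L] {a b : R} (ha : a ≠ 0) {x : L}
    (hx : IsIntegral R x) (h : algebraMap R L a * x = algebraMap R L b) : a ∣ b := by
  let := FractionRing.liftAlgebra R L
  have := FractionRing.isScalarTower_liftAlgebra R L
  let K := FractionRing R
  have haK : algebraMap R K a ≠ 0 := FaithfulSMul.algebraMap_eq_zero_iff R K |>.not.2 ha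
  have hxK : x = algebraMap K L (algebraMap R K b / algebraMap R K a) := by
    rw [map_div₀, ← IsScalarTower.algebraMap_apply, ← IsScalarTower.algebraMap_apply, ← h,
      mul_div_cancel_left₀ _ ((FaithfulSMul.algebraMap_eq_zero_iff R L).not.2 ha)]
  rw [hxK, isIntegral_algebraMap_iff (algebraMap K L).injective,
    IsIntegrallyClosed.isIntegral_iff] at hx
  obtain ⟨y, hy⟩ := hx
  refine ⟨y, FaithfulSMul.algebraMap_injective R K ?_⟩
  rw [map_mul, hy, mul_div_cancel₀ _ haK]

theorem pow_natDegree_dvd_leadingCoeff_mul_leadingCoeff {R L : Type*} [CommRing R] [IsDomain R]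
    [IsIntegrallyClosed R] [Field L] [IsAlgClosed L] [Algebra R L] [FaithfulSMul R L] {p q : R}
    (hpq : IsCoprime p q) (hq : q ≠ 0) {f g : R[X]} (hfg : g.aroots L =
      (f.aroots L).map (algebraMap R L p / algebraMap R L q - ·)) :
    q ^ f.natDegree ∣ f.leadingCoeff * g.leadingCoeff := by
  have hqL : algebraMap R L q ≠ 0 := (FaithfulSMul.algebraMap_eq_zero_iff R L).not.2 hq
  have hint := isIntegral_leadingCoeff_mul_leadingCoeff_mul_prod_add (R := R) (S := L)
    (IsAlgClosed.splits _) (IsAlgClosed.splits _) hfg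
  simp only [add_sub_cancel, Multiset.map_const', Multiset.prod_replicate,
    IsAlgClosed.card_aroots_eq_natDegree] at hint
  refine (hpq.symm.pow (m := f.natDegree) (n := f.natDegree)).dvd_of_dvd_mul_right
    (dvd_of_algebraMap_mul_eq (pow_ne_zero _ hq) hint ?_)
  rw [map_pow, map_mul, map_mul, map_pow, div_pow, mul_left_comm,
    mul_div_cancel₀ _ (pow_ne_zero _ hqL)]

theorem pow_le_mahlerMeasure_mul_mahlerMeasure {p q : ℤ} (hpq : IsCoprime p q) (hq : 0 < q)
    {f g : ℤ[X]} (hf : f ≠ 0) (hg : g ≠ 0)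
    (hfg : g.aroots ℂ = (f.aroots ℂ).map ((p / q : ℂ) - ·)) :
    (q * max 1 (|(p : ℝ)| / q - 1)) ^ f.natDegree ≤
      mahlerMeasure f * mahlerMeasure g := by
  have hlead : (q : ℝ) ^ f.natDegree ≤ |(f.leadingCoeff : ℝ)| * |(g.leadingCoeff : ℝ)| := by
    have hdvd := pow_natDegree_dvd_leadingCoeff_mul_leadingCoeff hpq hq.ne' hfg
    have hle := Int.le_of_dvd (abs_pos.2 (mul_ne_zero (leadingCoeff_ne_zero.2 hf)
      (leadingCoeff_ne_zero.2 hg))) ((dvd_abs _ _).2 hdvd)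
    rw [abs_mul] at hle
    exact_mod_cast hle
  have hprod : max 1 (|(p : ℝ)| / q - 1) ^ f.natDegree ≤
      ((f.aroots ℂ).map fun z => max ‖z‖ 1).prod * ((g.aroots ℂ).map fun z => max ‖z‖ 1).prod := by
    rw [hfg, Multiset.map_map, ← Multiset.prod_map_mul,
      ← IsAlgClosed.card_aroots_eq_natDegree (B := ℂ), ← Multiset.prod_replicate,
      ← Multiset.map_const']
    refine Multiset.prod_map_le_prod_map₀ _ _ (fun _ _ => by positivity) fun z _ => ?_
    have h := max_one_norm_add_sub_one_le z (p / q - z)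
    rwa [add_sub_cancel, norm_div, Complex.norm_intCast, Complex.norm_intCast,
      abs_of_pos (Int.cast_pos.2 hq)] at h
  rw [mul_pow, _root_.mahlerMeasure, _root_.mahlerMeasure, mul_mul_mul_comm]
  exact mul_le_mul hlead hprod (by positivity) (by positivity)

theorem max_abs_abs_sub_eq_mul_max {K : Type*} [Field K] [LinearOrder K] [IsStrictOrderedRing K]
    (p : K) {q : K} (hq : 0 < q) : max |(|p| - q)| q = q * max 1 (|p| / q - 1) := by
  rw [mul_max_of_nonneg _ _ hq.le, mul_one, mul_sub_one, mul_div_cancel₀ _ hq.ne', max_comm]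
  obtain h | h := abs_cases (|p| - q)
  · rw [h.1]
  · rw [max_eq_left (by linarith [abs_nonneg p]), max_eq_left (by linarith)]

theorem log_max_le_height_add_height {p q : ℤ} (hpq : IsCoprime p q) (hq : 0 < q) {u : ℂ}
    (hu : IsAlgebraic ℚ u) :
    Real.log (max |(|p| - q)| q : ℤ) ≤ height u + height (p / q - u) := by
  have hcast : (p / q : ℂ) = algebraMap ℚ ℂ (p / q) := by
    rw [map_div₀, map_intCast, map_intCast]
  have hv : IsAlgebraic ℚ ((p / q : ℂ) - u) := hcast ▸ (isAlgebraic_algebraMap _).sub hu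
  have haroots : (intMinpoly (p / q - u)).aroots ℂ =
      ((intMinpoly u).aroots ℂ).map ((p / q : ℂ) - ·) := by
    rw [aroots_intMinpoly hu, aroots_intMinpoly hv, hcast, aroots_minpoly_algebraMap_sub]
  have hdeg : (intMinpoly (p / q - u)).natDegree = (intMinpoly u).natDegree := by
    rw [← IsAlgClosed.card_aroots_eq_natDegree (B := ℂ), haroots, Multiset.card_map,
      IsAlgClosed.card_aroots_eq_natDegree]
  have hdeg_pos : 0 < (intMinpoly u).natDegree :=
    natDegree_intMinpoly hu ▸ minpoly.natDegree_pos hu.isIntegral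
  have hf := (irreducible_intMinpoly hu).ne_zero
  have hg := (irreducible_intMinpoly hv).ne_zero
  have hq' : (0 : ℝ) < q := Int.cast_pos.2 hq
  have hbound := pow_le_mahlerMeasure_mul_mahlerMeasure hpq hq hf hg haroots
  rw [← max_abs_abs_sub_eq_mul_max _ hq'] at hbound
  rw [height, height, ← natDegree_intMinpoly hu, ← natDegree_intMinpoly hv, hdeg, ← add_div,
    ← Real.log_mul (mahlerMeasure_pos hf).ne' (mahlerMeasure_pos hg).ne',
    le_div_iff₀ (Nat.cast_pos.2 hdeg_pos), mul_comm, ← Real.log_pow]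
  push_cast
  exact Real.log_le_log (pow_pos (lt_max_of_lt_right hq') _) hbound

-- At the pole `a = q / p` both sides vanish, through `x / 0 = 0` and `0⁻¹ = 0`.
theorem inv_mul_div_mul_sub {K : Type*} [Field K] (p : K) {q a : K} (hq : q ≠ 0) (ha : a ≠ 0) :
    (q * a / (p * a - q))⁻¹ = p / q - a⁻¹ := by
  rw [inv_div, sub_div, mul_div_mul_right _ _ ha, div_mul_cancel_left₀ hq]

theorem height_mul_div_mul_sub (p : ℤ) {q : ℤ} (hq : q ≠ 0) {α : ℂ} (hα : IsAlgebraic ℚ α)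
    (hα0 : α ≠ 0) : height (q * α / (p * α - q)) = height (p / q - α⁻¹) := by
  have hint (n : ℤ) : IsAlgebraic ℚ (n : ℂ) := isAlgebraic_intCast n
  have hσ : IsAlgebraic ℚ (q * α / (p * α - q)) := by
    rw [div_eq_mul_inv]
    exact ((hint q).mul hα).mul (((hint p).mul hα).sub (hint q)).inv
  rw [← height_inv hσ, inv_mul_div_mul_sub _ (Int.cast_ne_zero.2 hq) hα0]

theorem height_div_sub_intCast {p q : ℤ} (hpq : IsCoprime p q) (hq : q ≠ 0) (k : ℤ) :
    height (p / q - k) = Real.log (max |p - k * q| |q| : ℤ) := by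
  have hcop : IsCoprime (p - k * q) q := by
    simpa only [sub_eq_add_neg, neg_mul] using hpq.add_mul_right_left (-k)
  rw [← height_intCast_div hq hcop, Int.cast_sub, Int.cast_mul, sub_div,
    mul_div_cancel_right₀ _ (Int.cast_ne_zero.2 hq)]

theorem height_intCast (n : ℤ) : height n = Real.log (max |n| 1 : ℤ) := by
  simpa only [Int.cast_one, div_one, abs_one] using
    height_intCast_div one_ne_zero (isCoprime_one_right (x := n))

/-- Row 1 of Table 1: for `σ(z) = qz/(pz - q)` (an involution) with `p, q` coprime,
`q > 0`, `p ≠ 0` and `p/q ∉ {1, -1, 2, -2}`: for every algebraic `α ≠ 0` one has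
`h(α) + h(σ(α)) ≥ log max(||p| - q|, q)`, with equality at `α = 1` if `p > 0` and at
`α = -1` if `p < 0`. -/
theorem table1_row1 (p q : ℤ) (hpq : IsCoprime p q) (hq : 0 < q) (hp : p ≠ 0)
    (hratio : (p : ℚ) / (q : ℚ) ∉ ({1, -1, 2, -2} : Set ℚ)) :
    (∀ α : ℂ, IsAlgebraic ℚ α → α ≠ 0 →
      height α + height ((q : ℂ) * α / ((p : ℂ) * α - (q : ℂ)))
        ≥ Real.log (max (|(|p| - q)| : ℤ) (q : ℤ) : ℤ)) ∧
    (0 < p → height (1 : ℂ) + height ((q : ℂ) * 1 / ((p : ℂ) * 1 - (q : ℂ)))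
        = Real.log (max (|(|p| - q)| : ℤ) (q : ℤ) : ℤ)) ∧
    (p < 0 → height (-1 : ℂ) + height ((q : ℂ) * (-1) / ((p : ℂ) * (-1) - (q : ℂ)))
        = Real.log (max (|(|p| - q)| : ℤ) (q : ℤ) : ℤ)) := by
  have height_one : height 1 = 0 := by simpa using height_intCast 1
  have height_neg_one : height (-1) = 0 := by simpa using height_intCast (-1)
  refine ⟨fun α hα hα0 => ?_, fun hp_pos => ?_, fun hp_neg => ?_⟩
  · rw [height_mul_div_mul_sub p hq.ne' hα hα0, ← height_inv hα]
    exact log_max_le_height_add_height hpq hq hα.inv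
  · have h := height_div_sub_intCast hpq hq.ne' 1
    rw [Int.cast_one, one_mul, abs_of_pos hq] at h
    rw [height_mul_div_mul_sub p hq.ne' isAlgebraic_one one_ne_zero, inv_one, h, height_one,
      zero_add, abs_of_pos hp_pos]
  · have h := height_div_sub_intCast hpq hq.ne' (-1)
    rw [Int.cast_neg, Int.cast_one, abs_of_pos hq] at h
    rw [height_mul_div_mul_sub p hq.ne' isAlgebraic_one.neg (neg_ne_zero.2 one_ne_zero),
      inv_neg_one, h, height_neg_one, zero_add, abs_of_neg hp_neg, ← abs_neg, neg_sub', neg_one_mul,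
      neg_neg]
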